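/- Let N ≥ 2 and let Ω ⊆ ℝ^N be a nonempty open set. Let g : Ω × (0,∞) → (0,∞) be continuous such that for each x ∈ Ω the function t ↦ g(x,t) is strictly decreasing. Suppose u, v : Ω → ℝ are twice continuously differentiable positive functions satisfying Δu(x) + g(x,u(x)) ≤ 0 ≤ Δv(x) + g(x,v(x)) for all x ∈ Ω. Assume that for every y ∈ ∂Ω, limsup_{x→y, x∈Ω} (v(x) − u(x)) ≤ 0, and, in case Ω is unbounded, also limsup_{|x|→∞, x∈Ω} (v(x) − u(x)) ≤ 0. Then u(x) ≥ v(x) for all x ∈ Ω. -/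

import Mathlib

open Metric Set MeasureTheory Filter

noncomputable def laplacian {N : ℕ} (u : EuclideanSpace ℝ (Fin N) → ℝ)
    (x : EuclideanSpace ℝ (Fin N)) : ℝ :=
  ∑ i, iteratedFDeriv ℝ 2 u x ![EuclideanSpace.single i 1, EuclideanSpace.single i 1]

/-!
If `v - u` were positive somewhere, the boundary conditions would force it to attain a positive
maximum at some `z ∈ Ω`, where `Δ v z ≤ Δ u z`. But `u z < v z` and strict monotonicity give
`Δ v z ≥ -g z (v z) > -g z (u z) ≥ Δ u z`.
-/

section Comparison

open Bornology
open scoped Laplacian Topology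

lemma deriv_deriv_nonpos_of_isLocalMax {f : ℝ → ℝ} {a : ℝ} (h : IsLocalMax f a)
    (hf : ContinuousAt f a) : deriv (deriv f) a ≤ 0 := by
  by_contra! hpos
  have hmin : IsLocalMin f a := isLocalMin_of_deriv_deriv_pos hpos h.deriv_eq_zero hf
  have hconst : f =ᶠ[𝓝 a] fun _ => f a := by
    filter_upwards [h, hmin] with t hle hge using le_antisymm hle hge
  have hzero : deriv (deriv f) a = 0 := by simp [hconst.deriv.deriv_eq]
  exact hpos.ne' hzero

lemma deriv_deriv_comp_line {𝕜 E F : Type*} [NontriviallyNormedField 𝕜] [NormedAddCommGroup E]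
    [NormedSpace 𝕜 E] [NormedAddCommGroup F] [NormedSpace 𝕜 F] {f : E → F} {x : E}
    (hf : ContDiffAt 𝕜 2 f x) (e : E) :
    deriv (deriv fun t : 𝕜 => f (x + t • e)) 0 = iteratedFDeriv 𝕜 2 f x ![e, e] := by
  have hline (t : 𝕜) : HasDerivAt (fun t : 𝕜 => x + t • e) e t := by
    simpa using ((hasDerivAt_id t).smul_const e).const_add x
  have hlim : Tendsto (fun t : 𝕜 => x + t • e) (𝓝 0) (𝓝 x) := by
    simpa using (hline 0).continuousAt.tendsto
  have hfirst : deriv (fun t : 𝕜 => f (x + t • e)) =ᶠ[𝓝 0]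
      fun t => fderiv 𝕜 f (x + t • e) e := by
    filter_upwards [hlim.eventually (hf.eventually (by simp))] with t ht
    exact ((ht.differentiableAt two_ne_zero).hasFDerivAt.comp_hasDerivAt t (hline t)).deriv
  have hfderiv : HasFDerivAt (fderiv 𝕜 f) (fderiv 𝕜 (fderiv 𝕜 f) x) (x + (0 : 𝕜) • e) := by
    simpa using ((hf.fderiv_right (m := 1) le_rfl).differentiableAt one_ne_zero).hasFDerivAt
  have hsecond : HasDerivAt (fun t : 𝕜 => fderiv 𝕜 f (x + t • e) e)
      (fderiv 𝕜 (fderiv 𝕜 f) x e e) 0 :=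
    (ContinuousLinearMap.apply 𝕜 F e).hasFDerivAt.comp_hasDerivAt 0
      (hfderiv.comp_hasDerivAt 0 (hline 0))
  rw [hfirst.deriv_eq, hsecond.deriv, iteratedFDeriv_two_apply]
  simp

lemma iteratedFDeriv_two_nonpos_of_isLocalMax {E : Type*} [NormedAddCommGroup E]
    [NormedSpace ℝ E] {f : E → ℝ} {x : E} (hf : ContDiffAt ℝ 2 f x) (h : IsLocalMax f x)
    (e : E) : iteratedFDeriv ℝ 2 f x ![e, e] ≤ 0 := by
  have hline : ContinuousAt (fun t : ℝ => x + t • e) 0 := by fun_prop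
  rw [← deriv_deriv_comp_line hf e]
  refine deriv_deriv_nonpos_of_isLocalMax ?_ ?_
  · exact IsLocalMax.comp_continuous (f := f) (by simpa using h) hline
  · exact ContinuousAt.comp (g := f) (by simpa using hf.continuousAt) hline

lemma laplacian_nonpos_of_isLocalMax {E : Type*} [NormedAddCommGroup E] [InnerProductSpace ℝ E]
    [FiniteDimensional ℝ E] {f : E → ℝ} {x : E} (hf : ContDiffAt ℝ 2 f x)
    (h : IsLocalMax f x) : Δ f x ≤ 0 := by
  rw [InnerProductSpace.laplacian_eq_iteratedFDeriv_stdOrthonormalBasis]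
  exact Finset.sum_nonpos fun _ _ => iteratedFDeriv_two_nonpos_of_isLocalMax hf h _

lemma laplacian_eq_innerProductSpace_laplacian {N : ℕ} (u : EuclideanSpace ℝ (Fin N) → ℝ) :
    laplacian u = Δ u := by
  ext x
  simp [laplacian, InnerProductSpace.laplacian_eq_iteratedFDeriv_orthonormalBasis u
    (EuclideanSpace.basisFun (Fin N) ℝ)]

section Superlevel

variable {X α : Type*} [TopologicalSpace X] [LinearOrder α] [TopologicalSpace α]
  [OrderClosedTopology α] {s : Set X} {f : X → α} {c : α}

lemma isClosed_superlevel_of_frontier_lt (hf : ContinuousOn f s)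
    (hfrontier : ∀ y ∈ frontier s, ∀ᶠ x in 𝓝[s] y, f x < c) :
    IsClosed {x ∈ s | c ≤ f x} := by
  rw [← isOpen_compl_iff, isOpen_iff_eventually]
  intro y hy
  suffices h : ∀ᶠ x in 𝓝[s] y, f x < c by
    filter_upwards [eventually_nhdsWithin_iff.1 h] with x hx hxs
    exact (hx hxs.1).not_ge hxs.2
  by_cases hys : y ∈ s
  · exact (hf y hys).eventually_lt_const (not_le.1 fun hc => hy ⟨hys, hc⟩)
  by_cases hcl : y ∈ closure s
  · exact hfrontier y ⟨hcl, fun hint => hys (interior_subset hint)⟩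
  · simp [notMem_closure_iff_nhdsWithin_eq_bot.1 hcl]

lemma isCompact_superlevel_of_frontier_lt (hf : ContinuousOn f s)
    (hfrontier : ∀ y ∈ frontier s, ∀ᶠ x in 𝓝[s] y, f x < c)
    (hinfty : ∀ᶠ x in cocompact X ⊓ 𝓟 s, f x < c) :
    IsCompact {x ∈ s | c ≤ f x} := by
  obtain ⟨K, hK, hKc⟩ := mem_cocompact.1 (eventually_inf_principal.1 hinfty)
  refine hK.of_isClosed_subset (isClosed_superlevel_of_frontier_lt hf hfrontier) ?_
  intro x hx
  by_contra hxK
  exact (hKc hxK hx.1).not_ge hx.2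

lemma exists_isLocalMax_of_frontier_lt (hs : IsOpen s) (hf : ContinuousOn f s)
    (hfrontier : ∀ y ∈ frontier s, ∀ᶠ x in 𝓝[s] y, f x < c)
    (hinfty : ∀ᶠ x in cocompact X ⊓ 𝓟 s, f x < c) (hne : ∃ x ∈ s, c ≤ f x) :
    ∃ z ∈ s, c ≤ f z ∧ IsLocalMax f z := by
  obtain ⟨z, ⟨hzs, hcz⟩, hmax⟩ :=
    (isCompact_superlevel_of_frontier_lt hf hfrontier hinfty).exists_isMaxOn hne
      (hf.mono fun _ hx => hx.1)
  refine ⟨z, hzs, hcz, ?_⟩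
  filter_upwards [hs.mem_nhds hzs] with x hxs
  rcases le_total c (f x) with hcx | hxc
  · exact hmax ⟨hxs, hcx⟩
  · exact hxc.trans hcz

end Superlevel

lemma cocompact_inf_principal_eq_bot {X : Type*} [PseudoMetricSpace X] [ProperSpace X]
    {s : Set X} (hs : IsBounded s) : cocompact X ⊓ 𝓟 s = ⊥ := by
  rw [← cobounded_eq_cocompact, inf_principal_eq_bot]
  exact isBounded_def.1 hs

section InnerProductSpace

variable {E : Type*} [NormedAddCommGroup E] [InnerProductSpace ℝ E] [FiniteDimensional ℝ E]
  {Ω : Set E}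

theorem nonpos_of_laplacian_pos {w : E → ℝ} (hΩ : IsOpen Ω) (hw : ContDiffOn ℝ 2 w Ω)
    (hlap : ∀ x ∈ Ω, 0 < w x → 0 < Δ w x)
    (hfrontier : ∀ y ∈ frontier Ω, ∀ ε : ℝ, 0 < ε → ∀ᶠ x in 𝓝[Ω] y, w x ≤ ε)
    (hinfty : ∀ ε : ℝ, 0 < ε → ∀ᶠ x in cocompact E ⊓ 𝓟 Ω, w x ≤ ε) :
    ∀ x ∈ Ω, w x ≤ 0 := by
  intro x hx
  by_contra! hpos
  have hhalf : w x / 2 < w x := half_lt_self hpos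
  obtain ⟨z, hz, hxz, hmax⟩ := exists_isLocalMax_of_frontier_lt hΩ hw.continuousOn
    (fun y hy => (hfrontier y hy _ (half_pos hpos)).mono fun _ h => h.trans_lt hhalf)
    ((hinfty _ (half_pos hpos)).mono fun _ h => h.trans_lt hhalf) ⟨x, hx, le_rfl⟩
  have hle : Δ w z ≤ 0 := laplacian_nonpos_of_isLocalMax (hw.contDiffAt (hΩ.mem_nhds hz)) hmax
  exact (hlap z hz (hpos.trans_le hxz)).not_ge hle

theorem statement_0_general {g : E → ℝ → ℝ} {J : Set ℝ} {u v : E → ℝ} (hΩ : IsOpen Ω)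
    (hg_anti : ∀ x ∈ Ω, StrictAntiOn (g x) J)
    (hu : ContDiffOn ℝ 2 u Ω) (hv : ContDiffOn ℝ 2 v Ω)
    (huJ : MapsTo u Ω J) (hvJ : MapsTo v Ω J)
    (hsub : ∀ x ∈ Ω, Δ u x + g x (u x) ≤ 0) (hsup : ∀ x ∈ Ω, 0 ≤ Δ v x + g x (v x))
    (hbd : ∀ y ∈ frontier Ω, ∀ ε : ℝ, 0 < ε → ∀ᶠ x in 𝓝[Ω] y, v x - u x ≤ ε)
    (hinf : ¬ IsBounded Ω → ∀ ε : ℝ, 0 < ε → ∀ᶠ x in cocompact E ⊓ 𝓟 Ω, v x - u x ≤ ε) :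
    ∀ x ∈ Ω, v x ≤ u x := by
  have hlap : ∀ x ∈ Ω, 0 < (v - u) x → 0 < Δ (v - u) x := by
    intro x hx hpos
    have hnhds : Ω ∈ 𝓝 x := hΩ.mem_nhds hx
    have hg : g x (v x) < g x (u x) := hg_anti x hx (huJ hx) (hvJ hx) (sub_pos.1 hpos)
    rw [(hv.contDiffAt hnhds).laplacian_sub (hu.contDiffAt hnhds)]
    linarith [hsub x hx, hsup x hx]
  have hinfty : ∀ ε : ℝ, 0 < ε → ∀ᶠ x in cocompact E ⊓ 𝓟 Ω, (v - u) x ≤ ε := by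
    by_cases hb : IsBounded Ω
    · simp [cocompact_inf_principal_eq_bot hb]
    · exact hinf hb
  intro x hx
  exact sub_nonpos.1 (nonpos_of_laplacian_pos hΩ (hv.sub hu) hlap hbd hinfty x hx)

end InnerProductSpace

end Comparison

/-- Lemma 2.1 (comparison principle). -/
theorem statement_0 {N : ℕ} (hN : 2 ≤ N)
    (Ω : Set (EuclideanSpace ℝ (Fin N))) (hΩ : IsOpen Ω) (hne : Ω.Nonempty)
    (g : EuclideanSpace ℝ (Fin N) → ℝ → ℝ)
    (hg_cont : ContinuousOn (fun p : (EuclideanSpace ℝ (Fin N)) × ℝ => g p.1 p.2)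
      (Ω ×ˢ Ioi (0:ℝ)))
    (hg_pos : ∀ x ∈ Ω, ∀ t : ℝ, 0 < t → 0 < g x t)
    (hg_anti : ∀ x ∈ Ω, StrictAntiOn (g x) (Ioi (0:ℝ)))
    (u v : EuclideanSpace ℝ (Fin N) → ℝ)
    (hu : ContDiffOn ℝ 2 u Ω) (hv : ContDiffOn ℝ 2 v Ω)
    (hupos : ∀ x ∈ Ω, 0 < u x) (hvpos : ∀ x ∈ Ω, 0 < v x)
    (hsub : ∀ x ∈ Ω, laplacian u x + g x (u x) ≤ 0)
    (hsup : ∀ x ∈ Ω, 0 ≤ laplacian v x + g x (v x))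
    (hbd : ∀ y ∈ frontier Ω, ∀ ε : ℝ, 0 < ε → ∀ᶠ x in nhdsWithin y Ω, v x - u x ≤ ε)
    (hinf : ¬ Bornology.IsBounded Ω → ∀ ε : ℝ, 0 < ε →
      ∀ᶠ x in Filter.cocompact (EuclideanSpace ℝ (Fin N)) ⊓ Filter.principal Ω,
        v x - u x ≤ ε) :
    ∀ x ∈ Ω, v x ≤ u x := by
  simp only [laplacian_eq_innerProductSpace_laplacian] at hsub hsup
  exact statement_0_general hΩ hg_anti hu hv hupos hvpos hsub hsup hbd hinf
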